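/- arXiv:1509.02583 — 2 statements merged into one kernel-verified Lean document; each statement's English description precedes it below -/
import Mathlib

section
/- Let a, b, c, p > 0. Let B be a Beta(a,b) random variable and Z a generalized gamma random variable with density (p/Γ(c/p)) x^{c-1} e^{-x^p} on (0,∞), with B and Z independent. Then P(BZ > t) is asymptotically equivalent, as t → ∞, to (Γ(a+b)/(Γ(c/p)Γ(a))) · p^{-b} · t^{c-(b+1)p} · e^{-t^p}. -/
/-!
The idea is Laplace's method: given `Z > t`, the excess `Z ^ p - t ^ p` is of order one, so `Z` is
close to `t`, and `B Z > t` forces `B` to be close to `1`, where its tail is a pure power.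

Conditioning on `Z` and substituting `z ^ p = T + s` with `T = t ^ p` gives (`prod_tail_eq`)
`P(BZ > t) = exp (-T) / Γ(c/p) * ∫ s > 0, (T + s) ^ (c/p - 1) exp (-s) P(B > (1 + s/T) ^ (-1/p))`.
As `ε → 0+`, `P(B > 1 - ε) ~ Γ(a+b) / (Γ(a) Γ(b+1)) * ε ^ b` (`tendsto_betaTail_div`), and here
`ε = 1 - (1 + s/T) ^ (-1/p) ~ s / (p T)`. After division by `T ^ (c/p - 1 - b)` the integrand thus
converges pointwise to `Γ(a+b) / (Γ(a) Γ(b+1)) * p ^ (-b) * s ^ b * exp (-s)`, whose integral is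
`Γ(a+b) / Γ(a) * p ^ (-b)`. Dominated convergence applies (`tendsto_normalized_integral`) because
`P(B > 1 - ε) ≤ C ε ^ b` for all `ε > 0` (`exists_betaTail_le`), `ε ≤ s / (p T)`, and
`(1 + s/T) ^ r ≤ (1 + s) ^ |r|` once `T ≥ 1`.
-/

open MeasureTheory Filter Real Asymptotics

/-- The Beta(a,b) distribution on ℝ, via its density. -/
noncomputable def betaM (a b : ℝ) : Measure ℝ :=
  volume.withDensity fun x => ENNReal.ofReal
    (if 0 < x ∧ x < 1 then
      x ^ (a - 1) * (1 - x) ^ (b - 1) * (Real.Gamma (a + b) / (Real.Gamma a * Real.Gamma b))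
    else 0)

/-- The generalized gamma GG(c,p) distribution on ℝ, via its density. -/
noncomputable def genGammaM (c p : ℝ) : Measure ℝ :=
  volume.withDensity fun x => ENNReal.ofReal
    (if 0 < x then p / Real.Gamma (c / p) * x ^ (c - 1) * Real.exp (-(x ^ p)) else 0)

/-- The Gamma(r,1) distribution on ℝ, via its density. -/
noncomputable def gammaM (r : ℝ) : Measure ℝ :=
  volume.withDensity fun x => ENNReal.ofReal
    (if 0 < x then x ^ (r - 1) * Real.exp (-x) / Real.Gamma r else 0)

/-- The standard exponential distribution on ℝ, via its density. -/
noncomputable def expM : Measure ℝ :=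
  volume.withDensity fun x => ENNReal.ofReal (if 0 < x then Real.exp (-x) else 0)

open scoped Topology

/-! ### The beta tail near its right endpoint -/

lemma betaM_eq_betaMeasure (a b : ℝ) : betaM a b = ProbabilityTheory.betaMeasure a b := by
  unfold betaM ProbabilityTheory.betaMeasure
  congr 1
  ext x
  rw [ProbabilityTheory.betaPDF_eq]
  congr 1
  split_ifs with h
  · rw [ProbabilityTheory.beta, one_div_div]
    ring
  · rfl

/-- The tail `P(B > u)` of a `Beta(a, b)` variable. -/
noncomputable def betaTail (a b u : ℝ) : ℝ := (betaM a b (Set.Ioi u)).toReal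

lemma isProbabilityMeasure_betaM {a b : ℝ} (ha : 0 < a) (hb : 0 < b) :
    IsProbabilityMeasure (betaM a b) := by
  rw [betaM_eq_betaMeasure]
  exact ProbabilityTheory.isProbabilityMeasureBeta ha hb

lemma betaTail_nonneg (a b u : ℝ) : 0 ≤ betaTail a b u := ENNReal.toReal_nonneg

lemma betaTail_le_one {a b : ℝ} (ha : 0 < a) (hb : 0 < b) (u : ℝ) : betaTail a b u ≤ 1 := by
  have := isProbabilityMeasure_betaM ha hb
  exact measureReal_le_one

lemma betaTail_antitone {a b : ℝ} (ha : 0 < a) (hb : 0 < b) : Antitone (betaTail a b) := by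
  have := isProbabilityMeasure_betaM ha hb
  intro u v huv
  exact measureReal_mono (Set.Ioi_subset_Ioi huv)

lemma betaM_Ioi_of_one_le {a b u : ℝ} (hu : 1 ≤ u) : betaM a b (Set.Ioi u) = 0 := by
  unfold betaM
  rw [withDensity_apply _ measurableSet_Ioi]
  refine setLIntegral_eq_zero measurableSet_Ioi fun x (hx : u < x) => ?_
  simp [not_lt.2 (hu.trans hx.le)]

lemma intervalIntegrable_one_sub_rpow {b u : ℝ} (hb : 0 < b) :
    IntervalIntegrable (fun x : ℝ => (1 - x) ^ (b - 1)) volume u 1 := by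
  have h := (intervalIntegral.intervalIntegrable_rpow' (a := 1 - u) (b := 0)
    (r := b - 1) (by linarith)).comp_sub_left 1
  simpa using h

lemma integral_one_sub_rpow {b u : ℝ} (hb : 0 < b) :
    ∫ x in u..1, (1 - x) ^ (b - 1) = (1 - u) ^ b / b := by
  rw [intervalIntegral.integral_comp_sub_left (fun x => x ^ (b - 1)) 1,
    integral_rpow (Or.inl (by linarith))]
  simp [Real.zero_rpow hb.ne']

lemma intervalIntegrable_betaKernel {a b u : ℝ} (hb : 0 < b) (hu : 0 < u) (hu1 : u < 1) :
    IntervalIntegrable (fun x : ℝ => x ^ (a - 1) * (1 - x) ^ (b - 1)) volume u 1 := by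
  refine (intervalIntegrable_one_sub_rpow hb).continuousOn_mul fun x hx => ?_
  rw [Set.uIcc_of_le hu1.le] at hx
  exact (Real.continuousAt_rpow_const _ _ (Or.inl (hu.trans_le hx.1).ne')).continuousWithinAt

lemma betaTail_eq {a b u : ℝ} (ha : 0 < a) (hb : 0 < b) (hu : 0 < u) (hu1 : u < 1) :
    betaTail a b u = Real.Gamma (a + b) / (Real.Gamma a * Real.Gamma b) *
      ∫ x in u..1, x ^ (a - 1) * (1 - x) ^ (b - 1) := by
  have hG : 0 ≤ Real.Gamma (a + b) / (Real.Gamma a * Real.Gamma b) := by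
    have := Real.Gamma_pos_of_pos ha
    have := Real.Gamma_pos_of_pos hb
    have := Real.Gamma_pos_of_pos (add_pos ha hb)
    positivity
  rw [mul_comm, ← intervalIntegral.integral_mul_const, intervalIntegral.integral_of_le hu1.le,
    integral_Ioc_eq_integral_Ioo, integral_eq_lintegral_of_nonneg_ae, betaTail, betaM,
    withDensity_apply _ measurableSet_Ioi]
  · congr 1
    rw [← Set.Ioo_union_Ici_eq_Ioi hu1, lintegral_union measurableSet_Ici,
      setLIntegral_eq_zero (s := Set.Ici 1) measurableSet_Ici, add_zero]
    · refine setLIntegral_congr_fun measurableSet_Ioo fun x hx => ?_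
      simp [hu.trans hx.1, hx.2]
    · intro x (hx : 1 ≤ x)
      simp [not_lt.2 hx]
    · exact Set.disjoint_left.2 fun x hx hx' => absurd hx.2 (not_lt.2 hx')
  · refine ae_restrict_of_forall_mem measurableSet_Ioo fun x hx => ?_
    have h1 : 0 < x := hu.trans hx.1
    have h2 : 0 < 1 - x := sub_pos.2 hx.2
    have := Real.rpow_nonneg h1.le (a - 1)
    have := Real.rpow_nonneg h2.le (b - 1)
    simp only [Pi.zero_apply]
    positivity
  · exact Measurable.aestronglyMeasurable (by fun_prop)

/-- The beta tail at its right endpoint: `P(B > 1 - ε) ~ Γ(a+b) / (Γ(a) Γ(b+1)) * ε ^ b`. On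
`(1 - ε, 1)` the factor `x ^ (a - 1)` of the density lies between `1` and `(1 - ε) ^ (a - 1)`. -/
lemma tendsto_betaTail_div {a b : ℝ} (ha : 0 < a) (hb : 0 < b) :
    Tendsto (fun ε : ℝ => betaTail a b (1 - ε) / ε ^ b) (𝓝[>] 0)
      (𝓝 (Real.Gamma (a + b) / (Real.Gamma a * Real.Gamma (b + 1)))) := by
  have hGa := Real.Gamma_pos_of_pos ha
  have hGb := Real.Gamma_pos_of_pos hb
  have hGab := Real.Gamma_pos_of_pos (add_pos ha hb)
  set K := Real.Gamma (a + b) / (Real.Gamma a * Real.Gamma (b + 1)) with hK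
  have hK0 : 0 < K := by rw [hK, Real.Gamma_add_one hb.ne']; positivity
  have hlim : Tendsto (fun ε : ℝ => (1 - ε) ^ (a - 1)) (𝓝[>] 0) (𝓝 1) := by
    have : ContinuousAt (fun ε : ℝ => (1 - ε) ^ (a - 1)) 0 :=
      ContinuousAt.rpow_const (by fun_prop) (Or.inl (by norm_num))
    simpa using this.tendsto.mono_left nhdsWithin_le_nhds
  have hlo : Tendsto (fun ε : ℝ => K * min 1 ((1 - ε) ^ (a - 1))) (𝓝[>] 0) (𝓝 K) := by
    simpa using ((tendsto_const_nhds (x := (1 : ℝ))).min hlim).const_mul K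
  have hhi : Tendsto (fun ε : ℝ => K * max 1 ((1 - ε) ^ (a - 1))) (𝓝[>] 0) (𝓝 K) := by
    simpa using ((tendsto_const_nhds (x := (1 : ℝ))).max hlim).const_mul K
  -- The factor `x ^ (a - 1)` is monotone, in a direction that depends on the sign of `a - 1`.
  have hx : ∀ u : ℝ, 0 < u → ∀ x ∈ Set.Icc u 1,
      min 1 (u ^ (a - 1)) ≤ x ^ (a - 1) ∧ x ^ (a - 1) ≤ max 1 (u ^ (a - 1)) := by
    intro u hu x hx
    have hx0 : 0 < x := hu.trans_le hx.1
    rcases le_total 0 (a - 1) with h | h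
    · exact ⟨min_le_of_right_le (Real.rpow_le_rpow hu.le hx.1 h),
        le_max_of_le_left (Real.rpow_le_one hx0.le hx.2 h)⟩
    · exact ⟨min_le_of_left_le (Real.one_le_rpow_of_pos_of_le_one_of_nonpos hx0 hx.2 h),
        le_max_of_le_right (Real.rpow_le_rpow_of_nonpos hu hx.1 h)⟩
  have hC : ∀ (C ε : ℝ), 0 < ε → K * C = Real.Gamma (a + b) / (Real.Gamma a * Real.Gamma b) *
      (∫ x in (1 - ε)..1, C * (1 - x) ^ (b - 1)) / ε ^ b := by
    intro C ε hε
    have := (Real.rpow_pos_of_pos hε b).ne'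
    rw [intervalIntegral.integral_const_mul, integral_one_sub_rpow hb, hK,
      Real.Gamma_add_one hb.ne', sub_sub_cancel]
    field_simp
  have hε : ∀ᶠ ε : ℝ in 𝓝[>] 0, ε ∈ Set.Ioo (0 : ℝ) 1 := Ioo_mem_nhdsGT one_pos
  refine tendsto_of_tendsto_of_tendsto_of_le_of_le' hlo hhi ?_ ?_
  all_goals
    filter_upwards [hε] with ε ⟨h0, h1⟩
    have hi := (intervalIntegrable_one_sub_rpow (b := b) (u := 1 - ε) hb)
    have hk := intervalIntegrable_betaKernel (a := a) (b := b) (u := 1 - ε) hb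
      (by linarith) (by linarith)
    rw [betaTail_eq ha hb (by linarith) (by linarith), hC _ ε h0]
    gcongr
  · refine intervalIntegral.integral_mono_on (by linarith) (hi.const_mul _) hk fun x hx' => ?_
    exact mul_le_mul_of_nonneg_right (hx _ (by linarith) x hx').1
      (Real.rpow_nonneg (by linarith [hx'.2]) _)
  · refine intervalIntegral.integral_mono_on (by linarith) hk (hi.const_mul _) fun x hx' => ?_
    exact mul_le_mul_of_nonneg_right (hx _ (by linarith) x hx').2
      (Real.rpow_nonneg (by linarith [hx'.2]) _)

lemma exists_betaTail_le {a b : ℝ} (ha : 0 < a) (hb : 0 < b) :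
    ∃ C : ℝ, 0 < C ∧ ∀ ε : ℝ, 0 < ε → betaTail a b (1 - ε) ≤ C * ε ^ b := by
  set K := Real.Gamma (a + b) / (Real.Gamma a * Real.Gamma (b + 1)) with hK
  have h := (tendsto_betaTail_div ha hb).eventually_le_const (lt_add_one K)
  obtain ⟨δ, hδ, h⟩ := (mem_nhdsGT_iff_exists_Ioo_subset).1 h
  have hδ' : (0 : ℝ) < δ := hδ
  have hδb := Real.rpow_pos_of_pos hδ' b
  refine ⟨max (K + 1) (1 / δ ^ b), lt_max_of_lt_right (by positivity), fun ε hε => ?_⟩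
  have hεb := Real.rpow_pos_of_pos hε b
  rcases lt_or_ge ε δ with hlt | hge
  · have h1 : betaTail a b (1 - ε) / ε ^ b ≤ K + 1 := h ⟨hε, hlt⟩
    rw [div_le_iff₀ hεb] at h1
    exact h1.trans (mul_le_mul_of_nonneg_right (le_max_left _ _) hεb.le)
  · -- Away from `0` the bound `P(B > 1 - ε) ≤ 1` suffices.
    calc betaTail a b (1 - ε) ≤ 1 := betaTail_le_one ha hb _
      _ ≤ 1 / δ ^ b * ε ^ b := by
        rw [one_div_mul_eq_div, one_le_div hδb]
        exact Real.rpow_le_rpow hδ'.le hge hb.le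
      _ ≤ _ := mul_le_mul_of_nonneg_right (le_max_right _ _) hεb.le

/-! ### Integral representation of the product tail -/

/-- The integral representation of `P(BZ > t)` obtained by conditioning on `Z = z` and
substituting `z ^ p = t ^ p + s`. -/
lemma prod_tail_eq {a b c p t : ℝ} (ha : 0 < a) (hb : 0 < b) (hc : 0 < c) (hp : 0 < p)
    (ht : 0 < t) :
    (((betaM a b).prod (genGammaM c p)) {q : ℝ × ℝ | q.1 * q.2 > t}).toReal =
      Real.exp (-(t ^ p)) / Real.Gamma (c / p) * ∫ s in Set.Ioi (0 : ℝ),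
        (t ^ p + s) ^ (c / p - 1) * Real.exp (-s) *
          betaTail a b ((1 + s / t ^ p) ^ (-(1 / p))) := by
  have := isProbabilityMeasure_betaM ha hb
  have hG := Real.Gamma_pos_of_pos (div_pos hc hp)
  have hT : 0 < t ^ p := Real.rpow_pos_of_pos ht p
  have hset : MeasurableSet {q : ℝ × ℝ | q.1 * q.2 > t} :=
    measurableSet_lt measurable_const (by fun_prop)
  have hmeas : Measurable fun x : ℝ => ENNReal.ofReal
      (if 0 < x then p / Real.Gamma (c / p) * x ^ (c - 1) * Real.exp (-(x ^ p)) else 0) :=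
    (Measurable.ite measurableSet_Ioi (by fun_prop) (by fun_prop)).ennreal_ofReal
  have : SFinite (genGammaM c p) := by unfold genGammaM; infer_instance
  -- `φ` is the substitution `z = (t ^ p + s) ^ (1 / p)`, mapping `(0, ∞)` onto `(t, ∞)`.
  set φ : ℝ → ℝ := fun s => (t ^ p + s) ^ (1 / p) with hφ
  have hφp : ∀ s : ℝ, 0 < s → φ s ^ p = t ^ p + s := fun s hs => by
    simp only [hφ]
    rw [← Real.rpow_mul (by positivity), one_div_mul_cancel hp.ne', Real.rpow_one]
  have hφt : ∀ s : ℝ, 0 < s → t < φ s := fun s hs => by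
    have h0 : 0 ≤ φ s := by simp only [hφ]; positivity
    rw [← Real.rpow_lt_rpow_iff ht.le h0 hp, hφp s hs]
    linarith
  have himg : φ '' Set.Ioi 0 = Set.Ioi t := by
    ext z
    constructor
    · rintro ⟨s, hs, rfl⟩
      exact hφt s hs
    · intro (hz : t < z)
      refine ⟨z ^ p - t ^ p, sub_pos.2 (Real.rpow_lt_rpow ht.le hz hp), ?_⟩
      simp only [hφ, add_sub_cancel]
      rw [← Real.rpow_mul (ht.trans hz).le, mul_one_div_cancel hp.ne', Real.rpow_one]
  have hinj : Set.InjOn φ (Set.Ioi 0) := by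
    intro x hx y hy hxy
    have := congrArg (· ^ p) hxy
    simp only [hφp x hx, hφp y hy] at this
    linarith
  have hderiv : ∀ s ∈ Set.Ioi (0 : ℝ), HasDerivWithinAt φ
      (1 / p * (t ^ p + s) ^ (1 / p - 1)) (Set.Ioi 0) s := by
    intro s (hs : 0 < s)
    have h1 : HasDerivAt (fun s : ℝ => t ^ p + s) 1 s := (hasDerivAt_id s).const_add _
    have h2 := h1.rpow_const (p := 1 / p) (Or.inl (by positivity))
    rw [one_mul] at h2
    exact h2.hasDerivWithinAt
  rw [← integral_const_mul, integral_eq_lintegral_of_nonneg_ae]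
  · congr 1
    rw [Measure.prod_apply_symm hset, genGammaM,
      lintegral_withDensity_eq_lintegral_mul _ hmeas (measurable_measure_prodMk_right hset),
      ← lintegral_add_compl _ (measurableSet_Ioi (a := t)),
      setLIntegral_eq_zero (s := (Set.Ioi t)ᶜ) measurableSet_Ioi.compl, add_zero, ← himg,
      lintegral_image_eq_lintegral_abs_deriv_mul measurableSet_Ioi hderiv hinj]
    · refine setLIntegral_congr_fun measurableSet_Ioi fun s (hs : 0 < s) => ?_
      have hz : 0 < φ s := ht.trans (hφt s hs)
      have hw : 0 < t ^ p + s := by positivity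
      have hpre : (fun x : ℝ => (x, φ s)) ⁻¹' {q : ℝ × ℝ | q.1 * q.2 > t} =
          Set.Ioi ((1 + s / t ^ p) ^ (-(1 / p))) := by
        have : (1 + s / t ^ p) ^ (-(1 / p)) = t / φ s := by
          have h1 : 1 + s / t ^ p = (t ^ p + s) / t ^ p := by field_simp
          rw [Real.rpow_neg (by positivity), h1, Real.div_rpow hw.le hT.le, ← Real.rpow_mul ht.le,
            mul_one_div_cancel hp.ne', Real.rpow_one, inv_div]
        ext x
        rw [this]
        exact (div_lt_iff₀ hz).symm
      simp only [Pi.mul_apply]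
      rw [hpre, if_pos hz, ← ENNReal.ofReal_toReal (measure_ne_top (betaM a b) _),
        ← ENNReal.ofReal_mul (by positivity), ← ENNReal.ofReal_mul (by positivity)]
      congr 1
      rw [← betaTail, abs_of_pos (by positivity), hφp s hs, neg_add, Real.exp_add]
      have : (t ^ p + s) ^ (c / p - 1) = (t ^ p + s) ^ (1 / p - 1) * φ s ^ (c - 1) := by
        simp only [hφ]
        rw [← Real.rpow_mul hw.le, ← Real.rpow_add hw]
        congr 1
        field_simp
        ring
      rw [this]
      field_simp
    · intro z hz
      have hz : z ≤ t := by simpa using hz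
      simp only [Pi.mul_apply]
      split_ifs with h0
      · have : (fun x : ℝ => (x, z)) ⁻¹' {q : ℝ × ℝ | q.1 * q.2 > t} ⊆ Set.Ioi 1 := by
          intro x (hx : x * z > t)
          by_contra h
          have : x ≤ 1 := by simpa using h
          nlinarith
        rw [measure_mono_null this (betaM_Ioi_of_one_le le_rfl), mul_zero,
          Pi.zero_apply]
      · simp
  · refine ae_restrict_of_forall_mem measurableSet_Ioi fun s (hs : 0 < s) => ?_
    have := betaTail_nonneg a b ((1 + s / t ^ p) ^ (-(1 / p)))
    simp only [Pi.zero_apply]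
    positivity
  · have := (betaTail_antitone ha hb).measurable
    exact Measurable.aestronglyMeasurable (by fun_prop)

/-! ### Dominated convergence -/

/-- The dominating function of the limit theorem is integrable. -/
lemma integrableOn_bound {b k : ℝ} (hb : 0 < b) (hk : 0 ≤ k) :
    IntegrableOn (fun s : ℝ => (1 + s) ^ k * Real.exp (-s) * s ^ b) (Set.Ioi 0) := by
  refine integrable_of_isBigO_exp_neg (b := 1 / 2) (by norm_num) ?_ ?_
  · refine ContinuousOn.mul (ContinuousOn.mul ?_ (by fun_prop)) ?_
    · exact ContinuousOn.rpow_const (by fun_prop) fun _ _ => Or.inr hk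
    · exact ContinuousOn.rpow_const (by fun_prop) fun _ _ => Or.inr hb.le
  · have h1 : (fun s : ℝ => (1 + s) ^ k * Real.exp (-s) * s ^ b) =O[atTop]
        fun s => 2 ^ k * s ^ (k + b) * Real.exp (-s) := by
      refine IsBigO.of_bound 1 ?_
      filter_upwards [eventually_ge_atTop 1] with s hs
      have hs0 : 0 < s := by linarith
      rw [Real.norm_of_nonneg (by positivity), Real.norm_of_nonneg (by positivity), one_mul,
        Real.rpow_add hs0]
      have : (1 + s) ^ k ≤ 2 ^ k * s ^ k := by
        rw [← Real.mul_rpow (by norm_num) hs0.le]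
        exact Real.rpow_le_rpow (by linarith) (by linarith) hk
      calc (1 + s) ^ k * Real.exp (-s) * s ^ b
          ≤ (2 ^ k * s ^ k) * Real.exp (-s) * s ^ b := by gcongr
        _ = _ := by ring
    have h2 := ((isLittleO_rpow_exp_pos_mul_atTop (k + b) (b := 1 / 2)
      (by norm_num)).isBigO.const_mul_left ((2 : ℝ) ^ k)).mul
      (isBigO_refl (fun s : ℝ => Real.exp (-s)) atTop)
    refine h1.trans (h2.congr_right fun s => ?_)
    rw [← Real.exp_add]
    congr 1
    ring

lemma one_sub_div_le_rpow {p x : ℝ} (hp : 0 < p) (hx : 0 ≤ x) :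
    1 - x / p ≤ (1 + x) ^ (-(1 / p)) := by
  rw [Real.rpow_def_of_pos (by linarith)]
  have h1 := Real.add_one_le_exp (Real.log (1 + x) * (-(1 / p)))
  have h2 := div_le_div_of_nonneg_right (Real.log_le_sub_one_of_pos (x := 1 + x) (by linarith))
    hp.le
  rw [add_sub_cancel_left] at h2
  have h3 : Real.log (1 + x) * (-(1 / p)) = -(Real.log (1 + x) / p) := by ring
  linarith

/-- The normalized integral converges; the limit is the integral of the pointwise limit. -/
lemma tendsto_normalized_integral {a b r p : ℝ} (ha : 0 < a) (hb : 0 < b) (hp : 0 < p) :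
    Tendsto (fun T : ℝ => ∫ s in Set.Ioi (0 : ℝ), (1 + s / T) ^ r * Real.exp (-s) *
        (T ^ b * betaTail a b ((1 + s / T) ^ (-(1 / p))))) atTop
      (𝓝 (Real.Gamma (a + b) / Real.Gamma a * p ^ (-b))) := by
  have hGa := Real.Gamma_pos_of_pos ha
  have hGb := Real.Gamma_pos_of_pos (add_pos hb one_pos)
  set K := Real.Gamma (a + b) / (Real.Gamma a * Real.Gamma (b + 1)) with hK
  obtain ⟨C, hC0, hC⟩ := exists_betaTail_le ha hb
  have hlim : ∫ s in Set.Ioi (0 : ℝ), Real.exp (-s) * (K * (s / p) ^ b) =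
      Real.Gamma (a + b) / Real.Gamma a * p ^ (-b) := by
    have h1 : ∀ s ∈ Set.Ioi (0 : ℝ), Real.exp (-s) * (K * (s / p) ^ b) =
        K * p ^ (-b) * (Real.exp (-s) * s ^ (b + 1 - 1)) := by
      intro s (hs : 0 < s)
      rw [Real.div_rpow hs.le hp.le, Real.rpow_neg hp.le, add_sub_cancel_right]
      ring
    rw [setIntegral_congr_fun measurableSet_Ioi h1, integral_const_mul,
      ← Real.Gamma_eq_integral (by linarith), hK]
    field_simp
  rw [← hlim]
  have hanti := (betaTail_antitone ha hb).measurable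
  refine tendsto_integral_filter_of_dominated_convergence
    (fun s => C * p ^ (-b) * ((1 + s) ^ |r| * Real.exp (-s) * s ^ b)) ?_ ?_
    ((integrableOn_bound hb (abs_nonneg r)).const_mul _) ?_
  · exact Eventually.of_forall fun T => Measurable.aestronglyMeasurable (by fun_prop)
  · filter_upwards [eventually_ge_atTop 1] with T hT
    have hT0 : 0 < T := by linarith
    refine ae_restrict_of_forall_mem measurableSet_Ioi fun s (hs : 0 < s) => ?_
    have hB := betaTail_nonneg a b ((1 + s / T) ^ (-(1 / p)))
    have hsT : 0 < s / T := by positivity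
    have h1 : (1 + s / T) ^ r ≤ (1 + s) ^ |r| := by
      calc (1 + s / T) ^ r ≤ (1 + s / T) ^ |r| :=
            Real.rpow_le_rpow_of_exponent_le (by linarith) (le_abs_self r)
        _ ≤ _ := Real.rpow_le_rpow (by linarith)
            (by linarith [div_le_self hs.le hT]) (abs_nonneg r)
    have h2 : T ^ b * betaTail a b ((1 + s / T) ^ (-(1 / p))) ≤ C * p ^ (-b) * s ^ b := by
      calc T ^ b * betaTail a b ((1 + s / T) ^ (-(1 / p)))
          ≤ T ^ b * betaTail a b (1 - s / T / p) := by
            gcongr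
            exact betaTail_antitone ha hb (one_sub_div_le_rpow hp hsT.le)
        _ ≤ T ^ b * (C * (s / T / p) ^ b) := by
            gcongr
            exact hC _ (by positivity)
        _ = C * p ^ (-b) * s ^ b := by
            have := (Real.rpow_pos_of_pos hT0 b).ne'
            rw [Real.div_rpow hsT.le hp.le, Real.div_rpow hs.le hT0.le, Real.rpow_neg hp.le]
            field_simp
    have hTb : 0 ≤ T ^ b := by positivity
    rw [Real.norm_of_nonneg (by positivity)]
    calc (1 + s / T) ^ r * Real.exp (-s) * (T ^ b * betaTail a b ((1 + s / T) ^ (-(1 / p))))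
        ≤ (1 + s) ^ |r| * Real.exp (-s) * (C * p ^ (-b) * s ^ b) := by gcongr
      _ = _ := by ring
  · refine ae_restrict_of_forall_mem measurableSet_Ioi fun s (hs : 0 < s) => ?_
    have hx : Tendsto (fun T : ℝ => s / T) atTop (𝓝 0) := tendsto_const_nhds.div_atTop tendsto_id
    have hx1 : Tendsto (fun T : ℝ => 1 + s / T) atTop (𝓝 1) := by simpa using hx.const_add 1
    have h1 : Tendsto (fun T : ℝ => (1 + s / T) ^ r) atTop (𝓝 1) := by
      simpa using hx1.rpow_const (p := r) (Or.inl one_ne_zero)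
    -- `T * ε(T) → s / p`: the derivative of `x ↦ 1 - (1 + x) ^ (-1 / p)` at `0` is `1 / p`.
    set ε : ℝ → ℝ := fun T => 1 - (1 + s / T) ^ (-(1 / p)) with hε
    have hε0 : Tendsto ε atTop (𝓝 0) := by
      have h := (hx1.rpow_const (p := -(1 / p)) (Or.inl one_ne_zero)).const_sub 1
      rwa [Real.one_rpow, sub_self] at h
    have hεpos : ∀ᶠ T in atTop, 0 < ε T := by
      filter_upwards [eventually_gt_atTop 0] with T hT
      have : 0 < s / T := by positivity
      exact sub_pos.2 (Real.rpow_lt_one_of_one_lt_of_neg (by linarith) (by simpa using hp))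
    have hTε : Tendsto (fun T => T * ε T) atTop (𝓝 (s / p)) := by
      have hd : HasDerivAt (fun x : ℝ => 1 - (1 + x) ^ (-(1 / p))) (1 / p) 0 := by
        have h := ((((hasDerivAt_id (0 : ℝ)).const_add 1).rpow_const (p := -(1 / p))
          (Or.inl (by simp))).const_sub 1)
        simpa using h
      have hx' : Tendsto (fun T : ℝ => s / T) atTop (𝓝[≠] 0) := by
        refine tendsto_nhdsWithin_iff.2 ⟨hx, ?_⟩
        filter_upwards [eventually_gt_atTop 0] with T hT
        exact (div_pos hs hT).ne'
      have h := ((hasDerivAt_iff_tendsto_slope.1 hd).comp hx').const_mul s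
      rw [mul_one_div] at h
      refine h.congr' ?_
      filter_upwards [eventually_gt_atTop 0] with T hT
      simp only [Function.comp, slope_def_field, hε, add_zero, Real.one_rpow, sub_self, sub_zero]
      field_simp
    have h2 := (tendsto_betaTail_div ha hb).comp
      (tendsto_nhdsWithin_iff.2 ⟨hε0, hεpos⟩)
    have h3 : Tendsto (fun T => T ^ b * betaTail a b ((1 + s / T) ^ (-(1 / p)))) atTop
        (𝓝 (K * (s / p) ^ b)) := by
      refine (h2.mul (hTε.rpow_const (p := b) (Or.inr hb.le))).congr' ?_
      filter_upwards [eventually_gt_atTop 0, hεpos] with T hT hεT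
      have := (Real.rpow_pos_of_pos hεT b).ne'
      rw [Real.mul_rpow hT.le hεT.le]
      simp only [Function.comp]
      rw [show 1 - ε T = (1 + s / T) ^ (-(1 / p)) by simp [hε]]
      field_simp
    simpa using (h1.mul_const (Real.exp (-s))).mul h3

theorem beta_genGamma_tail (a b c p : ℝ) (ha : 0 < a) (hb : 0 < b) (hc : 0 < c) (hp : 0 < p) :
    Tendsto (fun t : ℝ =>
        (((betaM a b).prod (genGammaM c p)) {q : ℝ × ℝ | q.1 * q.2 > t}).toReal /
          (Real.Gamma (a + b) / (Real.Gamma (c / p) * Real.Gamma a) * p ^ (-b) *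
            t ^ (c - (b + 1) * p) * Real.exp (-(t ^ p))))
      atTop (nhds 1) := by
  have hGa := Real.Gamma_pos_of_pos ha
  have hGab := Real.Gamma_pos_of_pos (add_pos ha hb)
  have hGc := Real.Gamma_pos_of_pos (div_pos hc hp)
  have hL : 0 < Real.Gamma (a + b) / Real.Gamma a * p ^ (-b) := by positivity
  have h := ((tendsto_normalized_integral (r := c / p - 1) ha hb hp).comp
    (tendsto_rpow_atTop hp)).div_const (Real.Gamma (a + b) / Real.Gamma a * p ^ (-b))
  rw [div_self hL.ne'] at h
  refine h.congr' ?_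
  filter_upwards [eventually_gt_atTop 0] with t ht
  have hT : 0 < t ^ p := Real.rpow_pos_of_pos ht p
  have hint : ∫ s in Set.Ioi (0 : ℝ), (t ^ p + s) ^ (c / p - 1) * Real.exp (-s) *
        betaTail a b ((1 + s / t ^ p) ^ (-(1 / p))) =
      t ^ (c - (b + 1) * p) * ∫ s in Set.Ioi (0 : ℝ), (1 + s / t ^ p) ^ (c / p - 1) *
        Real.exp (-s) * ((t ^ p) ^ b * betaTail a b ((1 + s / t ^ p) ^ (-(1 / p)))) := by
    rw [← integral_const_mul]
    refine setIntegral_congr_fun measurableSet_Ioi fun s (hs : 0 < s) => ?_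
    have h1 : t ^ p + s = t ^ p * (1 + s / t ^ p) := by field_simp
    have h2 : (t ^ p + s) ^ (c / p - 1) =
        t ^ (c - (b + 1) * p) * (t ^ p) ^ b * (1 + s / t ^ p) ^ (c / p - 1) := by
      rw [h1, Real.mul_rpow hT.le (by positivity), ← Real.rpow_mul ht.le, ← Real.rpow_mul ht.le,
        ← Real.rpow_add ht]
      congr 2
      field_simp
      ring
    simp only [h2]
    ring
  rw [prod_tail_eq ha hb hc hp ht, hint]
  have := (Real.rpow_pos_of_pos ht (c - (b + 1) * p)).ne'
  simp only [Function.comp]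
  -- Naming the integral keeps `field_simp` from rewriting under the binder.
  generalize ∫ s in Set.Ioi (0 : ℝ), (1 + s / t ^ p) ^ (c / p - 1) * Real.exp (-s) *
    ((t ^ p) ^ b * betaTail a b ((1 + s / t ^ p) ^ (-(1 / p)))) = I
  field_simp
end

section
/- Let a, b, p > 0, let B be Beta(a,b) and E an independent standard exponential. Then P(B^p (w + E) > w) ∼ (Γ(b)/B(a,b)) (pw)^{-b} as w → ∞. -/
/-!
Integrating out the exponential variable first gives `P(x ^ p * (w + E) > w) = exp (-w (x⁻ᵖ - 1))`
for `0 < x < 1`, so the probability is, up to the Beta normalising constant, the Laplace-type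
integral of `x ^ (a - 1) * (1 - x) ^ (b - 1) * exp (-w (x⁻ᵖ - 1))` over `(0, 1)`. It concentrates
at `x = 1` on the scale `1 / w`: after the substitution `x = 1 - t / w` and multiplication by
`w ^ b`, the integrand converges pointwise to `t ^ (b - 1) * exp (-p t)`, whose integral is
`p ^ (-b) * Γ(b)`.

Dominated convergence applies because half of the exponent absorbs the possible singularity
`x ^ (a - 1)` at `x = 0` (`rpow_mul_exp_le`), while Bernoulli's inequality
`(1 - u)⁻ᵖ ≥ 1 + p u` turns the other half into `exp (-p t / 2)`.
-/


open MeasureTheory Filter Real Asymptotics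

lemma expM_Ioi {c : ℝ} (hc : 0 ≤ c) : expM (Set.Ioi c) = ENNReal.ofReal (exp (-c)) := by
  rw [expM, withDensity_apply _ measurableSet_Ioi,
    setLIntegral_congr_fun (g := fun x => ENNReal.ofReal (exp (-x))) measurableSet_Ioi
      (fun x (hx : c < x) => by simp [hc.trans_lt hx]),
    ← ofReal_integral_eq_lintegral_ofReal (integrableOn_exp_neg_Ioi c)
      (Eventually.of_forall fun x => (exp_pos _).le), integral_exp_neg_Ioi]

/-- The unnormalised Beta density times the conditional probability that `x ^ p * (w + E) > w`. -/
noncomputable def laplaceKernel (a b p w x : ℝ) : ℝ :=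
  if 0 < x ∧ x < 1 then
    x ^ (a - 1) * (1 - x) ^ (b - 1) * exp (-(w * (x ^ (-p) - 1)))
  else 0

lemma measurable_laplaceKernel (a b p w : ℝ) : Measurable (laplaceKernel a b p w) :=
  Measurable.ite measurableSet_Ioo (by fun_prop) (by fun_prop)

lemma laplaceKernel_nonneg (a b p w x : ℝ) : 0 ≤ laplaceKernel a b p w x := by
  unfold laplaceKernel
  split_ifs with h
  · have := h.1
    have : 0 < 1 - x := by linarith [h.2]
    positivity
  · exact le_rfl

lemma one_le_rpow_neg {p x : ℝ} (hp : 0 < p) (hx : 0 < x) (hx1 : x < 1) : 1 ≤ x ^ (-p) :=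
  one_le_rpow_of_pos_of_le_one_of_nonpos hx hx1.le (by linarith)

/-- The inequality `x ^ p * (w + y) > w` amounts to `y > w (x⁻ᵖ - 1)`, an exponential tail. -/
lemma expM_section {p w x : ℝ} (hp : 0 < p) (hw : 0 < w) (hx : 0 < x) (hx1 : x < 1) :
    expM {y | x ^ p * (w + y) > w} = ENNReal.ofReal (exp (-(w * (x ^ (-p) - 1)))) := by
  have h1 := one_le_rpow_neg hp hx hx1
  rw [← expM_Ioi (mul_nonneg hw.le (by linarith))]
  congr 1
  ext y
  have hxp : 0 < x ^ p := rpow_pos_of_pos hx p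
  simp only [Set.mem_ofPred_eq, Set.mem_Ioi, gt_iff_lt]
  rw [rpow_neg hx.le, ← div_lt_iff₀' hxp, div_eq_mul_inv]
  constructor <;> intro h <;> linarith

lemma prob_eq_integral {a b p w : ℝ} (ha : 0 < a) (hb : 0 < b) (hp : 0 < p) (hw : 0 < w) :
    (((betaM a b).prod expM) {q : ℝ × ℝ | q.1 ^ p * (w + q.2) > w}).toReal =
      Gamma (a + b) / (Gamma a * Gamma b) * ∫ x, laplaceKernel a b p w x := by
  have : SFinite expM := by unfold expM; infer_instance
  have hC : 0 < Gamma (a + b) / (Gamma a * Gamma b) := by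
    have := Gamma_pos_of_pos ha
    have := Gamma_pos_of_pos hb
    have := Gamma_pos_of_pos (add_pos ha hb)
    positivity
  have hS : MeasurableSet {q : ℝ × ℝ | q.1 ^ p * (w + q.2) > w} :=
    measurableSet_lt measurable_const (by fun_prop)
  rw [Measure.prod_apply hS, betaM, lintegral_withDensity_eq_lintegral_mul _ _
    (measurable_measure_prodMk_left hS), ← integral_const_mul,
    integral_eq_lintegral_of_nonneg_ae
      (Eventually.of_forall fun x => mul_nonneg hC.le (laplaceKernel_nonneg a b p w x))
      ((measurable_laplaceKernel a b p w).const_mul _).aestronglyMeasurable]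
  · congr 1
    refine lintegral_congr fun x => ?_
    simp only [Pi.mul_apply, Set.preimage_ofPred_eq, laplaceKernel]
    split_ifs with h
    · have h1 : 0 < 1 - x := by linarith [h.2]
      have h0 := h.1
      rw [expM_section hp hw h.1 h.2, ← ENNReal.ofReal_mul (by positivity)]
      congr 1
      ring
    · simp
  · exact (Measurable.ite measurableSet_Ioo (by fun_prop) (by fun_prop)).ennreal_ofReal

/-- The substitution `x = 1 - t / w`. -/
lemma integral_rescale (a b p : ℝ) {w : ℝ} (hw : 0 < w) :
    w ^ b * ∫ x, laplaceKernel a b p w x =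
      ∫ t, w ^ (b - 1) * laplaceKernel a b p w (1 - t / w) := by
  rw [integral_const_mul, Measure.integral_comp_div (fun t => laplaceKernel a b p w (1 - t)) w,
    integral_sub_left_eq_self (laplaceKernel a b p w) volume 1, abs_of_pos hw, smul_eq_mul,
    rpow_sub_one hw.ne']
  field_simp

/-- With `y = x⁻ᵖ ≥ 1`, the left-hand side is a power of `y` times `exp (1 - y)`. -/
lemma rpow_mul_exp_le (a : ℝ) {p : ℝ} (hp : 0 < p) :
    ∃ K : ℝ, ∀ x : ℝ, 0 < x → x < 1 → x ^ (a - 1) * exp (-(x ^ (-p) - 1)) ≤ K := by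
  set n := ⌈(1 - a) / p⌉₊
  refine ⟨n.factorial * exp 1, fun x hx hx1 => ?_⟩
  have hy := one_le_rpow_neg hp hx hx1
  set y := x ^ (-p) with hydef
  have h1 : x ^ (a - 1) = y ^ ((1 - a) / p) := by
    rw [hydef, ← rpow_mul hx.le]
    congr 1
    field_simp
    ring
  have h2 : y ^ ((1 - a) / p) ≤ y ^ n := by
    rw [← rpow_natCast]
    exact rpow_le_rpow_of_exponent_le hy (Nat.le_ceil _)
  have h3 : y ^ n ≤ n.factorial * exp y := by
    have := pow_div_factorial_le_exp y (by linarith) n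
    rwa [div_le_iff₀' (by positivity)] at this
  calc x ^ (a - 1) * exp (-(y - 1)) ≤ (n.factorial * exp y) * exp (-(y - 1)) := by
        rw [h1]; gcongr; exact h2.trans h3
    _ = n.factorial * exp 1 := by
        rw [mul_assoc, ← exp_add]; congr 2; ring

/-- Bernoulli's inequality for the exponent `-p`. -/
lemma one_add_mul_le_rpow_neg {p u : ℝ} (hp : 0 < p) (hu : u < 1) :
    1 + p * u ≤ (1 - u) ^ (-p) := by
  have h0 : 0 < 1 - u := by linarith
  rw [rpow_def_of_pos h0]
  have h1 := add_one_le_exp (log (1 - u) * -p)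
  have h2 := log_le_sub_one_of_pos h0
  nlinarith

lemma rescaled_eq {a b p w t : ℝ} (ht : 0 < t) (htw : t < w) :
    w ^ (b - 1) * laplaceKernel a b p w (1 - t / w) =
      t ^ (b - 1) * ((1 - t / w) ^ (a - 1) * exp (-(w * ((1 - t / w) ^ (-p) - 1)))) := by
  have hw : 0 < w := ht.trans htw
  have h1 : 0 < t / w := div_pos ht hw
  have h2 : t / w < 1 := (div_lt_one hw).2 htw
  rw [laplaceKernel, if_pos ⟨by linarith, by linarith⟩, sub_sub_cancel, div_rpow ht.le hw.le]
  have : w ^ (b - 1) ≠ 0 := (rpow_pos_of_pos hw _).ne'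
  field_simp

lemma rescaled_eq_zero {a b p w t : ℝ} (hw : 0 < w) (h : t ≤ 0 ∨ w ≤ t) :
    w ^ (b - 1) * laplaceKernel a b p w (1 - t / w) = 0 := by
  rw [laplaceKernel, if_neg, mul_zero]
  rintro ⟨h1, h2⟩
  have h3 : 0 < t / w := by linarith
  have h4 : t / w < 1 := by linarith
  rw [div_lt_one hw] at h4
  rw [div_pos_iff_of_pos_right hw] at h3
  rcases h with h | h <;> linarith

/-- The limit is the derivative at `u = 0` of `u ↦ (1 - t u)⁻ᵖ`, taken along `u = 1 / w`. -/
lemma tendsto_exponent (p t : ℝ) :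
    Tendsto (fun w : ℝ => w * ((1 - t / w) ^ (-p) - 1)) atTop (nhds (p * t)) := by
  have hd : HasDerivAt (fun u : ℝ => (1 - t * u) ^ (-p)) (p * t) 0 := by
    have h1 : HasDerivAt (fun u : ℝ => 1 - t * u) (-t) 0 := by
      simpa using ((hasDerivAt_id (0 : ℝ)).const_mul t).const_sub 1
    convert h1.rpow_const (p := -p) (Or.inl (by simp)) using 1
    simp
    ring
  have h2 := hd.tendsto_slope_zero_right.comp tendsto_inv_atTop_nhdsGT_zero
  refine h2.congr fun w => ?_
  simp [div_eq_mul_inv]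

lemma tendsto_rescaled (a b p : ℝ) (t : ℝ) :
    Tendsto (fun w : ℝ => w ^ (b - 1) * laplaceKernel a b p w (1 - t / w)) atTop
      (nhds ((Set.Ioi 0).indicator (fun t : ℝ => t ^ (b - 1) * exp (-(p * t))) t)) := by
  rcases le_or_gt t 0 with ht | ht
  · rw [Set.indicator_of_notMem (by simpa using ht)]
    refine tendsto_const_nhds.congr' ?_
    filter_upwards [eventually_gt_atTop 0] with w hw
    exact (rescaled_eq_zero hw (Or.inl ht)).symm
  · rw [Set.indicator_of_mem (by simpa using ht)]
    have h1 : Tendsto (fun w : ℝ => (1 - t / w) ^ (a - 1)) atTop (nhds 1) := by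
      have : Tendsto (fun w : ℝ => 1 - t / w) atTop (nhds 1) := by
        simpa using (tendsto_const_nhds (x := (1 : ℝ))).sub
          (tendsto_const_nhds (x := t).div_atTop tendsto_id)
      simpa using this.rpow_const (p := a - 1) (Or.inl one_ne_zero)
    have h2 := (continuous_exp.tendsto _).comp (tendsto_exponent p t).neg
    have h3 := (h1.mul h2).const_mul (t ^ (b - 1))
    rw [one_mul] at h3
    refine h3.congr' ?_
    filter_upwards [eventually_gt_atTop t] with w hw
    exact (rescaled_eq ht hw).symm

/-- The integrable majorant, uniform in `w ≥ 2`, for the rescaled integrand. -/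
lemma rescaled_le {a b p w t K : ℝ} (hp : 0 < p)
    (hK : ∀ x : ℝ, 0 < x → x < 1 → x ^ (a - 1) * exp (-(x ^ (-p) - 1)) ≤ K) (hw : 2 ≤ w) :
    w ^ (b - 1) * laplaceKernel a b p w (1 - t / w) ≤
      (Set.Ioi 0).indicator (fun t : ℝ => K * (t ^ (b - 1) * exp (-(p / 2 * t)))) t := by
  have hK0 : 0 ≤ K := le_trans (by positivity) (hK (1 / 2) (by norm_num) (by norm_num))
  have hw0 : 0 < w := by linarith
  by_cases h : 0 < t ∧ t < w
  · obtain ⟨ht, htw⟩ := h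
    rw [Set.indicator_of_mem (by simpa using ht), rescaled_eq ht htw]
    have h1 : 0 < t / w := div_pos ht hw0
    have h2 : t / w < 1 := (div_lt_one hw0).2 htw
    have hx := hK (1 - t / w) (by linarith) (by linarith)
    have hB := one_add_mul_le_rpow_neg hp h2
    have hx0 : 0 < 1 - t / w := by linarith
    set y := (1 - t / w) ^ (-p)
    have hy : 0 ≤ y - 1 := by nlinarith
    have hwy : p * t ≤ w * (y - 1) := by
      have : w * (p * (t / w)) = p * t := by field_simp
      nlinarith
    -- Half of the exponent exceeds `y - 1` because `w ≥ 2`; the other half exceeds `p t / 2`.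
    have he : exp (-(w * (y - 1))) ≤ exp (-(y - 1)) * exp (-(p / 2 * t)) := by
      rw [← exp_add, exp_le_exp]
      nlinarith
    calc t ^ (b - 1) * ((1 - t / w) ^ (a - 1) * exp (-(w * (y - 1))))
        ≤ t ^ (b - 1) * ((1 - t / w) ^ (a - 1) * (exp (-(y - 1)) * exp (-(p / 2 * t)))) := by
          gcongr
      _ = t ^ (b - 1) * (((1 - t / w) ^ (a - 1) * exp (-(y - 1))) * exp (-(p / 2 * t))) := by
          ring
      _ ≤ t ^ (b - 1) * (K * exp (-(p / 2 * t))) := by gcongr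
      _ = _ := by ring
  · rw [rescaled_eq_zero hw0 (by rw [not_and_or] at h; simpa using h)]
    exact Set.indicator_nonneg (fun t (ht : 0 < t) => by positivity) t

/-- The Laplace asymptotics, by dominated convergence for the rescaled integrand. -/
lemma tendsto_rpow_mul_integral {b p : ℝ} (a : ℝ) (hb : 0 < b) (hp : 0 < p) :
    Tendsto (fun w : ℝ => w ^ b * ∫ x, laplaceKernel a b p w x) atTop
      (nhds (p ^ (-b) * Gamma b)) := by
  obtain ⟨K, hK⟩ := rpow_mul_exp_le a hp
  have hlim : ∫ t, (Set.Ioi 0).indicator (fun t : ℝ => t ^ (b - 1) * exp (-(p * t))) t =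
      p ^ (-b) * Gamma b := by
    rw [integral_indicator measurableSet_Ioi, integral_rpow_mul_exp_neg_mul_Ioi hb hp, one_div,
      inv_rpow hp.le, rpow_neg hp.le]
  rw [← hlim]
  have hD := tendsto_integral_filter_of_dominated_convergence (μ := volume) (l := atTop)
    (F := fun w t => w ^ (b - 1) * laplaceKernel a b p w (1 - t / w))
    (f := (Set.Ioi 0).indicator fun t : ℝ => t ^ (b - 1) * exp (-(p * t)))
    ((Set.Ioi 0).indicator fun t : ℝ => K * (t ^ (b - 1) * exp (-(p / 2 * t))))
    (Eventually.of_forall fun w =>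
      (((measurable_laplaceKernel a b p w).comp
        (by fun_prop : Measurable fun t : ℝ => 1 - t / w)).const_mul _).aestronglyMeasurable)
    (by
      filter_upwards [eventually_ge_atTop 2] with w hw
      refine Eventually.of_forall fun t => ?_
      have hw0 : 0 < w := by linarith
      rw [norm_of_nonneg (mul_nonneg (rpow_nonneg hw0.le _) (laplaceKernel_nonneg ..))]
      exact rescaled_le hp hK hw)
    (by
      rw [integrable_indicator_iff measurableSet_Ioi]
      have := integrableOn_rpow_mul_exp_neg_mul_rpow (p := 1) (s := b - 1) (b := p / 2)
        (by linarith) zero_lt_one (by positivity)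
      refine Integrable.const_mul ?_ K
      simpa [IntegrableOn] using this)
    (Eventually.of_forall fun t => tendsto_rescaled a b p t)
  refine hD.congr' ?_
  filter_upwards [eventually_gt_atTop 0] with w hw
  exact (integral_rescale a b p hw).symm

theorem beta_exp_shift_prob_asymptotic (a b p : ℝ) (ha : 0 < a) (hb : 0 < b) (hp : 0 < p) :
    Tendsto (fun w : ℝ =>
        (((betaM a b).prod expM) {q : ℝ × ℝ | q.1 ^ p * (w + q.2) > w}).toReal /
          (Real.Gamma b / (Real.Gamma a * Real.Gamma b / Real.Gamma (a + b)) * (p * w) ^ (-b)))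
      atTop (nhds 1) := by
  have hL : p ^ (-b) * Gamma b ≠ 0 :=
    (mul_pos (rpow_pos_of_pos hp _) (Gamma_pos_of_pos hb)).ne'
  have h := (tendsto_rpow_mul_integral a hb hp).div_const (p ^ (-b) * Gamma b)
  rw [div_self hL] at h
  refine h.congr' ?_
  filter_upwards [eventually_gt_atTop 0] with w hw
  rw [prob_eq_integral ha hb hp hw, mul_rpow hp.le hw.le, rpow_neg hw.le]
  have h1 := (Gamma_pos_of_pos ha).ne'
  have h2 := (Gamma_pos_of_pos hb).ne'
  have h3 := (Gamma_pos_of_pos (add_pos ha hb)).ne'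
  have h4 := (rpow_pos_of_pos hw b).ne'
  have h5 := (rpow_pos_of_pos hp (-b)).ne'
  field_simp
end
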